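/- arXiv:1104.0707 — 2 statements merged into one kernel-verified Lean document; each statement's English description precedes it below -/
import Mathlib

section
/- Let G be a finite simple graph with maximum vertex degree Δ, and for a natural number q let P_G(q) denote the number of proper q-colorings of G (the number of functions from the vertices of G to a q-element set such that adjacent vertices receive different values). Then for every natural number q with q ≥ 10·Δ + 1, one has P_G(q−1)·P_G(q+1) ≤ P_G(q)². -/
/-!
The values `P_G(z)` are governed by the zeros of `P_G`. Attach a new vertex to `G`, joined to a set
`B` of vertices: as a polynomial in the number of colors, the count of colorings of this cone,
divided by `z * P_G(z)`, is the probability that a uniform color avoids the colors on `B`.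
Adding a vertex `u` to `B` changes the count by a contraction, which is again a cone, over `G`
with the edges at `u` deleted. By induction on the set of vertices this ratio stays within
`s ^ |B| - 1` of `1`, provided `s ^ Δ ≤ (2 - s ^ Δ) * (s - 1) * |z|`, and hence `P_G(z) ≠ 0`. Taking
`s = 1 + 7 / (3 * |z|)` shows that all zeros satisfy `|z| ≤ 7 * Δ`.

For real `x` with `x ^ 2 ≥ 2 * (7 * Δ) ^ 2 + 1`, every zero `z` then has `Re ((x - z) ^ 2) ≥ 1 / 2`,
that is, `|(x - 1 - z) * (x + 1 - z)| = |(x - z) ^ 2 - 1| ≤ |(x - z) ^ 2|`; multiply over all zeros.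
-/

open Polynomial

section ChromaticPolynomial

variable {V W : Type*}

theorem polynomial_eq_of_eval_natCast_eq {R : Type*} [CommRing R] [IsDomain R] [CharZero R]
    {p r : R[X]} (h : ∀ q : ℕ, p.eval (q : R) = r.eval (q : R)) : p = r := by
  refine p.eq_of_infinite_eval_eq r ?_
  refine (Set.infinite_range_of_injective (Nat.cast_injective (R := R))).mono ?_
  rintro _ ⟨q, rfl⟩
  exact h q

/-- The setoids on the vertices of `G` whose classes are independent sets. -/
abbrev IndepSetoid (G : SimpleGraph V) : Type _ :=
  {s : Setoid V // ∀ ⦃a b⦄, G.Adj a b → ¬ s a b}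

/-- The chromatic polynomial, obtained by sorting the colorings of `G` according to their partition
into color classes: a partition into `k` independent sets comes from `q (q - 1) ⋯ (q - k + 1)`
colorings with `q` colors. -/
noncomputable def chromaticPolynomial (G : SimpleGraph V) : ℤ[X] :=
  ∑ᶠ s : IndepSetoid G, descPochhammer ℤ (Nat.card (Quotient s.1))

instance finite_setoid [Finite V] : Finite (Setoid V) :=
  Finite.of_injective (fun s : Setoid V ↦ s.r) fun _ _ h ↦ Setoid.ext fun a b ↦ by
    exact iff_of_eq (congrFun₂ h a b)

theorem ker_embedding_comp_mk {α : Type*} {s : Setoid V} (e : Quotient s ↪ α) :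
    Setoid.ker (fun a ↦ e ⟦a⟧) = s :=
  Setoid.ext fun _ _ ↦ e.injective.eq_iff.trans Quotient.eq

/-- A coloring is a partition into independent color classes with distinct colors on the classes. -/
noncomputable def sigmaEmbeddingEquivColoring (G : SimpleGraph V) (α : Type*) :
    (Σ s : IndepSetoid G, (Quotient s.1 ↪ α)) ≃ G.Coloring α :=
  .ofBijective
    (fun x ↦ .mk (fun a ↦ x.2 ⟦a⟧) fun hab h ↦ x.1.2 hab (Quotient.exact (x.2.injective h))) <| by
  refine ⟨?_, fun c ↦ ⟨⟨⟨.ker c, fun _ _ hab ↦ c.valid hab⟩,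
    ⟨Setoid.kerLift c, Setoid.kerLift_injective c⟩⟩, rfl⟩⟩
  rintro ⟨⟨s, hs⟩, e⟩ ⟨⟨t, ht⟩, e'⟩ h
  have h_eq : (fun a ↦ e ⟦a⟧) = fun a ↦ e' ⟦a⟧ := congrArg DFunLike.coe h
  obtain rfl : s = t := (ker_embedding_comp_mk e).symm.trans <|
    (congrArg Setoid.ker h_eq).trans (ker_embedding_comp_mk e')
  obtain rfl : e = e' := DFunLike.ext _ _ <| Quotient.ind (congrFun h_eq)
  rfl

theorem eval_natCast_chromaticPolynomial [Finite V] (G : SimpleGraph V) (q : ℕ) :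
    (chromaticPolynomial G).eval (q : ℤ) = Nat.card (G.Coloring (Fin q)) := by
  have := Fintype.ofFinite (IndepSetoid G)
  have (s : IndepSetoid G) := Fintype.ofFinite (Quotient s.1)
  rw [← Nat.card_congr (sigmaEmbeddingEquivColoring G (Fin q)), Nat.card_sigma, chromaticPolynomial,
    finsum_eq_sum_of_fintype, eval_finsetSum]
  simp only [descPochhammer_eval_eq_descFactorial, Nat.card_eq_fintype_card,
    Fintype.card_embedding_eq, Fintype.card_fin, Nat.cast_sum]

theorem aeval_natCast_chromaticPolynomial [Finite V] {R : Type*} [CommRing R] (G : SimpleGraph V)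
    (q : ℕ) : aeval (q : R) (chromaticPolynomial G) = Nat.card (G.Coloring (Fin q)) := by
  simpa [eval_natCast_chromaticPolynomial] using
    aeval_algebraMap_apply_eq_algebraMap_eval (A := R) (q : ℤ) (chromaticPolynomial G)

theorem chromaticPolynomial_congr [Finite V] [Finite W] {G : SimpleGraph V} {H : SimpleGraph W}
    (e : G ≃g H) : chromaticPolynomial G = chromaticPolynomial H :=
  polynomial_eq_of_eval_natCast_eq fun q ↦ by
    simp only [eval_natCast_chromaticPolynomial, Nat.card_congr (e.homCongr .refl)]

theorem chromaticPolynomial_bot [Finite V] :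
    chromaticPolynomial (⊥ : SimpleGraph V) = X ^ Nat.card V :=
  polynomial_eq_of_eval_natCast_eq fun q ↦ by
    let e : (⊥ : SimpleGraph V).Coloring (Fin q) ≃ (V → Fin q) :=
      ⟨(⇑), fun f ↦ .mk f (fun h ↦ h.elim), fun _ ↦ rfl, fun _ ↦ rfl⟩
    simp [eval_natCast_chromaticPolynomial, Nat.card_congr e, Nat.card_fun]

end ChromaticPolynomial

section DeletionContraction

variable {V α : Type*} {G : SimpleGraph V} {s t : V}

/-- Deletion: a coloring of `G ⊔ edge s t` is a coloring of `G` that separates `s` and `t`. -/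
def coloringSupEdgeEquiv (hst : s ≠ t) :
    {c : G.Coloring α // c s ≠ c t} ≃ (G ⊔ SimpleGraph.edge s t).Coloring α where
  toFun c := .mk c.1 fun {a b} hab ↦ by
    rcases hab with hab | hab
    · exact c.1.valid hab
    · rcases (SimpleGraph.edge_adj ..).1 hab with ⟨⟨rfl, rfl⟩ | ⟨rfl, rfl⟩, -⟩
      exacts [c.2, c.2.symm]
  invFun c := ⟨.mk c fun hab ↦ c.valid (.inl hab),
    c.valid (.inr ((SimpleGraph.edge_adj ..).2 ⟨.inl ⟨rfl, rfl⟩, hst⟩))⟩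

variable [DecidableEq V]

/-- The contraction of `t` into `s`, on the same vertex set: `s` takes over all edges at `t`, and
`t` becomes isolated. -/
def contractInto (G : SimpleGraph V) (s t : V) : SimpleGraph V :=
  G.map (Function.update id t s)

theorem contractInto_adj {a b : V} :
    (contractInto G s t).Adj a b ↔ a ≠ b ∧
      ((G.Adj a b ∧ a ≠ t ∧ b ≠ t) ∨ (a = s ∧ G.Adj t b) ∨ (b = s ∧ G.Adj t a)) := by
  simp only [contractInto, SimpleGraph.map_adj', Function.update_apply, id]
  grind [SimpleGraph.adj_comm, SimpleGraph.irrefl]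

theorem update_id_apply_ne_of_adj (hadj : ¬ G.Adj s t) {a b : V} (hab : G.Adj a b) :
    Function.update id t s a ≠ Function.update id t s b := by
  simp only [Function.update_apply, id]
  grind [hab.ne, hab.symm]

theorem update_apply_update_id {c : V → α} (hst : s ≠ t) (hc : c s = c t) (a : α) (v : V) :
    Function.update c t a (Function.update id t s v) = c v := by
  obtain rfl | hv := eq_or_ne v t
  · simp [hst, hc]
  · simp [hv]

/-- Contraction: a coloring of `contractInto G s t` is a coloring of `G` that identifies `s` and
`t`, together with an arbitrary color for the isolated vertex `t`. -/
def coloringContractIntoEquiv (hst : s ≠ t) (hadj : ¬ G.Adj s t) :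
    (contractInto G s t).Coloring α ≃ {c : G.Coloring α // c s = c t} × α where
  toFun g := ⟨⟨.mk (fun v ↦ g (Function.update id t s v)) fun hab ↦ g.valid <|
    SimpleGraph.map_adj_apply' hab (update_id_apply_ne_of_adj hadj hab), by
      change g _ = g _
      simp [hst]⟩, g t⟩
  invFun c := .mk (Function.update c.1.1 t c.2) <| by
    rintro _ _ ⟨-, a, b, hab, rfl, rfl⟩
    simpa only [update_apply_update_id hst c.1.2] using c.1.1.valid hab
  left_inv g := DFunLike.ext _ _ fun v ↦ by
    change Function.update (fun v ↦ g (Function.update id t s v)) t (g t) v = g v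
    obtain rfl | hv := eq_or_ne v t
    · simp
    · simp [hv]
  right_inv := fun ⟨⟨c, hc⟩, a⟩ ↦ by
    refine Prod.ext (Subtype.ext (DFunLike.ext _ _ ?_)) ?_
    · exact update_apply_update_id hst hc a
    · exact Function.update_self t a c

theorem X_mul_chromaticPolynomial_eq_sup_edge_add_contractInto [Finite V] (hst : s ≠ t)
    (hadj : ¬ G.Adj s t) :
    X * chromaticPolynomial G = X * chromaticPolynomial (G ⊔ SimpleGraph.edge s t) +
      chromaticPolynomial (contractInto G s t) := by
  refine polynomial_eq_of_eval_natCast_eq fun q ↦ ?_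
  have h_split : Nat.card (G.Coloring (Fin q)) =
      Nat.card {c : G.Coloring (Fin q) // c s = c t} +
        Nat.card {c : G.Coloring (Fin q) // c s ≠ c t} := by
    classical
    rw [← Nat.card_sum, Nat.card_congr (Equiv.sumCompl fun c : G.Coloring (Fin q) ↦ c s = c t)]
  simp only [eval_add, eval_mul, eval_X, eval_natCast_chromaticPolynomial, h_split,
    Nat.card_congr (coloringSupEdgeEquiv hst),
    Nat.card_congr (coloringContractIntoEquiv hst hadj), Nat.card_prod, Nat.card_fin]
  push_cast
  ring

end DeletionContraction

section Cone

variable {V : Type*}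

/-- The graph `G` together with a new vertex `none` that is joined to the vertices in `B`. -/
def coneOver (G : SimpleGraph V) (B : Set V) : SimpleGraph (Option V) where
  Adj
    | some a, some b => G.Adj a b
    | some a, none => a ∈ B
    | none, some b => b ∈ B
    | none, none => False
  symm.symm
    | some _, some _ => G.symm.symm _ _
    | some _, none | none, some _ | none, none => id
  loopless.irrefl
    | some _ => G.irrefl
    | none => id

/-- In the cone over the empty set the new vertex is isolated, so its color is arbitrary. -/
def coloringConeOverEmptyEquiv (G : SimpleGraph V) (α : Type*) :
    (coneOver G ∅).Coloring α ≃ α × G.Coloring α where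
  toFun c := (c none, .mk (fun v ↦ c (some v)) fun {a b} hab ↦
    c.valid (v := some a) (w := some b) hab)
  invFun x := .mk (fun v ↦ v.elim x.1 x.2) fun {a b} ↦
    match a, b with
    | some _, some _ => x.2.valid
    | some _, none | none, some _ | none, none => False.elim
  left_inv c := DFunLike.ext _ _ <| by rintro (_ | _) <;> rfl
  right_inv _ := rfl

theorem chromaticPolynomial_coneOver_empty [Finite V] (G : SimpleGraph V) :
    chromaticPolynomial (coneOver G ∅) = X * chromaticPolynomial G :=
  polynomial_eq_of_eval_natCast_eq fun q ↦ by
    simp [eval_natCast_chromaticPolynomial, Nat.card_congr (coloringConeOverEmptyEquiv G (Fin q))]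

theorem coneOver_insert (G : SimpleGraph V) (u : V) (B : Set V) :
    coneOver G (insert u B) = coneOver G B ⊔ SimpleGraph.edge none (some u) := by
  ext (_ | a) (_ | b) <;> simp [coneOver, SimpleGraph.edge_adj, or_comm]

variable [DecidableEq V]

theorem contractInto_coneOver (G : SimpleGraph V) {u : V} {B : Set V} (hu : u ∉ B) :
    contractInto (coneOver G B) none (some u) =
      coneOver (G.deleteIncidenceSet u) (B ∪ G.neighborSet u) := by
  ext (_ | a) (_ | b) <;> simp only [contractInto_adj, coneOver, SimpleGraph.deleteIncidenceSet_adj,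
    Set.mem_union, SimpleGraph.mem_neighborSet] <;> grind [SimpleGraph.Adj.ne]

theorem comap_swap_coneOver_empty (G : SimpleGraph V) (u : V) :
    (coneOver G ∅).comap (Equiv.swap none (some u)) =
      coneOver (G.deleteIncidenceSet u) (G.neighborSet u) := by
  ext (_ | a) (_ | b) <;> simp only [SimpleGraph.comap_adj, coneOver, Equiv.swap_apply_def,
    SimpleGraph.deleteIncidenceSet_adj, SimpleGraph.mem_neighborSet] <;>
    grind [SimpleGraph.adj_comm, SimpleGraph.irrefl]

end Cone

section ConeChromaticPolynomial

variable {V : Type*} [Finite V]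

theorem chromaticPolynomial_coneOver_deleteIncidenceSet_neighborSet (G : SimpleGraph V) (u : V) :
    chromaticPolynomial (coneOver (G.deleteIncidenceSet u) (G.neighborSet u)) =
      X * chromaticPolynomial G := by
  classical
  rw [← comap_swap_coneOver_empty, chromaticPolynomial_congr (.comap _ _),
    chromaticPolynomial_coneOver_empty]

theorem X_mul_chromaticPolynomial_coneOver (G : SimpleGraph V) {u : V} {B : Set V} (hu : u ∉ B) :
    X * chromaticPolynomial (coneOver G B) = X * chromaticPolynomial (coneOver G (insert u B)) +
      chromaticPolynomial (coneOver (G.deleteIncidenceSet u) (B ∪ G.neighborSet u)) := by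
  classical
  rw [coneOver_insert, ← contractInto_coneOver G hu]
  exact X_mul_chromaticPolynomial_eq_sup_edge_add_contractInto (Option.some_ne_none u).symm hu

end ConeChromaticPolynomial

section ZeroFree

variable {V 𝕜 : Type*} [NormedField 𝕜] {G : SimpleGraph V} {M B : Set V} {u : V} {z : 𝕜} {s : ℝ}
  {d : ℕ}

local notation "P(" G ")(" z ")" => aeval z (chromaticPolynomial G)

/-- Attaching a new vertex to `G`, joined to a subset `B` of `M`, multiplies the value at `z` of
the chromatic polynomial by `z` up to a relative error of at most `s ^ |B| - 1`. This is the
induction hypothesis of the zero-freeness argument. -/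
def ConeBound (z : 𝕜) (s : ℝ) (G : SimpleGraph V) (M : Set V) : Prop :=
  ∀ B ⊆ M, ‖P(coneOver G B)(z) - z * P(G)(z)‖ ≤ (s ^ B.ncard - 1) * ‖z * P(G)(z)‖

theorem ConeBound.norm_coneOver_le (h : ConeBound z s G M) (hB : B ⊆ M) :
    ‖P(coneOver G B)(z)‖ ≤ s ^ B.ncard * ‖z * P(G)(z)‖ := by
  linarith [h B hB, norm_sub_norm_le P(coneOver G B)(z) (z * P(G)(z))]

theorem ConeBound.le_norm_coneOver (h : ConeBound z s G M) (hB : B ⊆ M) :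
    (2 - s ^ B.ncard) * ‖z * P(G)(z)‖ ≤ ‖P(coneOver G B)(z)‖ := by
  linarith [h B hB, norm_sub_norm_le (z * P(G)(z)) P(coneOver G B)(z),
    norm_sub_rev (z * P(G)(z)) P(coneOver G B)(z)]

variable [Finite V]

theorem ConeBound.norm_deleteIncidenceSet_le (h : ConeBound z s (G.deleteIncidenceSet u) M)
    (hM : G.neighborSet u ⊆ M) (hs : 1 ≤ s) (hd : (G.neighborSet u).ncard ≤ d) :
    (2 - s ^ d) * ‖z * P(G.deleteIncidenceSet u)(z)‖ ≤ ‖z * P(G)(z)‖ := by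
  calc (2 - s ^ d) * ‖z * P(G.deleteIncidenceSet u)(z)‖
      ≤ (2 - s ^ (G.neighborSet u).ncard) * ‖z * P(G.deleteIncidenceSet u)(z)‖ := by gcongr
    _ ≤ ‖P(coneOver (G.deleteIncidenceSet u) (G.neighborSet u))(z)‖ := h.le_norm_coneOver hM
    _ = ‖z * P(G)(z)‖ := by
      rw [chromaticPolynomial_coneOver_deleteIncidenceSet_neighborSet, map_mul, aeval_X]

theorem ne_zero_of_pow_le (hs : 1 < s) (hz : s ^ d ≤ (2 - s ^ d) * (s - 1) * ‖z‖) : z ≠ 0 := by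
  rintro rfl
  have : 0 < s ^ d := by positivity
  simp only [norm_zero, mul_zero] at hz
  exact this.not_ge hz

theorem ConeBound.norm_coneOver_insert_sub_le (h : ConeBound z s (G.deleteIncidenceSet u) M)
    (hM : G.neighborSet u ⊆ M) (hBM : B ⊆ M) (hu : u ∉ B) (hs : 1 < s)
    (hd : (G.neighborSet u).ncard ≤ d) (hz : s ^ d ≤ (2 - s ^ d) * (s - 1) * ‖z‖) :
    ‖P(coneOver G (insert u B))(z) - P(coneOver G B)(z)‖ ≤
      s ^ B.ncard * (s - 1) * ‖z * P(G)(z)‖ := by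
  set N := G.neighborSet u
  set H := G.deleteIncidenceSet u
  have h_contract : z * (P(coneOver G (insert u B))(z) - P(coneOver G B)(z)) =
      -P(coneOver H (B ∪ N))(z) := by
    have := congrArg (aeval z) (X_mul_chromaticPolynomial_coneOver G hu)
    simp only [map_add, map_mul, aeval_X] at this
    linear_combination -this
  have h_card : (B ∪ N).ncard ≤ B.ncard + d := (Set.ncard_union_le B N).trans (by gcongr)
  have hz_pos : 0 < ‖z‖ := norm_pos_iff.2 (ne_zero_of_pow_le hs hz)
  refine le_of_mul_le_mul_left ?_ hz_pos
  calc ‖z‖ * ‖P(coneOver G (insert u B))(z) - P(coneOver G B)(z)‖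
      = ‖P(coneOver H (B ∪ N))(z)‖ := by rw [← norm_mul, h_contract, norm_neg]
    _ ≤ s ^ (B ∪ N).ncard * ‖z * P(H)(z)‖ := h.norm_coneOver_le (Set.union_subset hBM hM)
    _ ≤ s ^ (B.ncard + d) * ‖z * P(H)(z)‖ := by gcongr; exact hs.le
    _ = s ^ B.ncard * (s ^ d * ‖z * P(H)(z)‖) := by ring
    _ ≤ s ^ B.ncard * ((2 - s ^ d) * (s - 1) * ‖z‖ * ‖z * P(H)(z)‖) := by gcongr
    _ = s ^ B.ncard * ((s - 1) * ‖z‖ * ((2 - s ^ d) * ‖z * P(H)(z)‖)) := by ring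
    _ ≤ s ^ B.ncard * ((s - 1) * ‖z‖ * ‖z * P(G)(z)‖) := by
      have : 0 ≤ s - 1 := by linarith
      gcongr
      exact h.norm_deleteIncidenceSet_le hM hs.le hd
    _ = ‖z‖ * (s ^ B.ncard * (s - 1) * ‖z * P(G)(z)‖) := by ring

theorem ncard_neighborSet_deleteIncidenceSet_le (G : SimpleGraph V) (u v : V) :
    ((G.deleteIncidenceSet u).neighborSet v).ncard ≤ (G.neighborSet v).ncard :=
  Set.ncard_le_ncard fun _ hw ↦ G.deleteIncidenceSet_le u hw

theorem coneBound_of_support_subset (hd : ∀ v, (G.neighborSet v).ncard ≤ d) (hs : 1 < s)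
    (hz : s ^ d ≤ (2 - s ^ d) * (s - 1) * ‖z‖) (hM : G.support ⊆ M) : ConeBound z s G M := by
  induction M using WellFoundedLT.induction generalizing G with
  | ind M ih =>
    intro B hB
    induction B, B.toFinite using Set.Finite.induction_on with
    | empty => simp [chromaticPolynomial_coneOver_empty]
    | @insert u B hu _ ihB =>
      obtain ⟨huM, hBM⟩ := Set.insert_subset_iff.1 hB
      have h_delete : ConeBound z s (G.deleteIncidenceSet u) (M \ {u}) :=
        ih _ (Set.sdiff_singleton_ssubset.2 huM)
          (fun v ↦ (ncard_neighborSet_deleteIncidenceSet_le G u v).trans (hd v))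
          ((G.support_deleteIncidenceSet_subset u).trans (Set.sdiff_subset_sdiff_left hM))
      have h_step := h_delete.norm_coneOver_insert_sub_le
        (Set.subset_sdiff_singleton (fun v hv ↦ hM ⟨u, hv.symm⟩) (G.notMem_neighborSet_self))
        (Set.subset_sdiff_singleton hBM hu) hu hs (hd u) hz
      rw [Set.ncard_insert_of_notMem hu, pow_succ]
      linarith [ihB hBM, norm_sub_le_norm_sub_add_norm_sub P(coneOver G (insert u B))(z)
        P(coneOver G B)(z) (z * P(G)(z))]

theorem coneBound_univ (hd : ∀ v, (G.neighborSet v).ncard ≤ d) (hs : 1 < s)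
    (hz : s ^ d ≤ (2 - s ^ d) * (s - 1) * ‖z‖) : ConeBound z s G .univ :=
  coneBound_of_support_subset hd hs hz (Set.subset_univ _)

theorem aeval_chromaticPolynomial_ne_zero (hd : ∀ v, (G.neighborSet v).ncard ≤ d) (hs : 1 < s)
    (hz : s ^ d ≤ (2 - s ^ d) * (s - 1) * ‖z‖) : P(G)(z) ≠ 0 := by
  have hz_ne : z ≠ 0 := ne_zero_of_pow_le hs hz
  have hs_lt : 0 < 2 - s ^ d := by
    have h_pow : 0 < s ^ d := by positivity
    have h_pos : 0 < (2 - s ^ d) * ((s - 1) * ‖z‖) := by linarith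
    exact pos_of_mul_pos_left h_pos (mul_nonneg (by linarith) (norm_nonneg z))
  induction G using WellFoundedLT.induction with
  | ind G ih =>
    obtain rfl | hG := eq_or_ne G ⊥
    · simp [chromaticPolynomial_bot, hz_ne]
    obtain ⟨u, v, huv⟩ := SimpleGraph.ne_bot_iff_exists_adj.1 hG
    have hd' w : ((G.deleteIncidenceSet u).neighborSet w).ncard ≤ d :=
      (ncard_neighborSet_deleteIncidenceSet_le G u w).trans (hd w)
    have h_lt : G.deleteIncidenceSet u < G := (G.deleteIncidenceSet_le u).lt_of_not_ge fun h ↦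
      (SimpleGraph.deleteIncidenceSet_adj.1 (h huv)).2.1 rfl
    have h_pos : 0 < ‖z * P(G.deleteIncidenceSet u)(z)‖ :=
      norm_pos_iff.2 (mul_ne_zero hz_ne (ih _ h_lt hd'))
    have h_le := (coneBound_univ hd' hs hz).norm_deleteIncidenceSet_le
      (Set.subset_univ _) hs.le (hd u)
    exact right_ne_zero_of_mul (norm_pos_iff.1 ((mul_pos hs_lt h_pos).trans_le h_le))

theorem exp_one_third_le : Real.exp (1 / 3) ≤ 7 / 5 := by
  refine le_of_pow_le_pow_left₀ three_ne_zero (by norm_num) ?_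
  calc Real.exp (1 / 3) ^ 3 = Real.exp 1 := by rw [← Real.exp_nat_mul]; norm_num
    _ ≤ (7 / 5) ^ 3 := by linarith [Real.exp_one_lt_d9]

theorem norm_le_of_aeval_chromaticPolynomial_eq_zero (hd : ∀ v, (G.neighborSet v).ncard ≤ d)
    (hz : P(G)(z) = 0) : ‖z‖ ≤ 7 * d := by
  contrapose! hz
  have hz_pos : 0 < ‖z‖ := lt_of_le_of_lt (by positivity) hz
  set ε := 7 / 3 / ‖z‖ with hε
  have hε_pos : 0 < ε := by positivity
  have hε_mul : ε * ‖z‖ = 7 / 3 := div_mul_cancel₀ _ hz_pos.ne'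
  have h_pow : (1 + ε) ^ d ≤ 7 / 5 := by
    calc (1 + ε) ^ d ≤ Real.exp ε ^ d := by gcongr; linarith [Real.add_one_le_exp ε]
      _ = Real.exp (d * ε) := (Real.exp_nat_mul ε d).symm
      _ ≤ Real.exp (1 / 3) := by
        rw [Real.exp_le_exp, hε, ← mul_div_assoc, div_le_iff₀ hz_pos]
        linarith
      _ ≤ 7 / 5 := exp_one_third_le
  refine aeval_chromaticPolynomial_ne_zero hd (s := 1 + ε) (by linarith) ?_
  rw [add_sub_cancel_left, mul_assoc, hε_mul]
  linarith

end ZeroFree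

section LogConcavity

theorem norm_sub_one_le_norm {w : ℂ} (hw : 1 / 2 ≤ w.re) : ‖w - 1‖ ≤ ‖w‖ := by
  rw [← sq_le_sq₀ (norm_nonneg _) (norm_nonneg _), Complex.sq_norm, Complex.sq_norm,
    Complex.normSq_sub]
  simp only [map_one, mul_one]
  linarith

theorem norm_sub_one_sub_mul_norm_add_one_sub_le {r x : ℝ} {z : ℂ} (hz : ‖z‖ ≤ r)
    (hx : 2 * r ^ 2 + 1 ≤ x ^ 2) : ‖x - 1 - z‖ * ‖x + 1 - z‖ ≤ ‖x - z‖ ^ 2 := by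
  have h_norm : z.re ^ 2 + z.im ^ 2 ≤ r ^ 2 := by
    rw [sq, sq, ← Complex.normSq_apply, Complex.normSq_eq_norm_sq]
    gcongr
  have h_re : 1 / 2 ≤ (((x : ℂ) - z) ^ 2).re := by
    simp only [sq, Complex.mul_re, Complex.sub_re, Complex.sub_im, Complex.ofReal_re,
      Complex.ofReal_im]
    nlinarith [sq_nonneg (x - 2 * z.re)]
  rw [← norm_mul, ← norm_pow, show (x - 1 - z) * (x + 1 - z) = (x - z) ^ 2 - 1 by ring]
  exact norm_sub_one_le_norm h_re

theorem norm_eval_eq_prod_roots {𝕜 : Type*} [NormedField 𝕜] {p : 𝕜[X]} (hp : p.Splits) (z : 𝕜) :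
    ‖p.eval z‖ = ‖p.leadingCoeff‖ * (p.roots.map fun a ↦ ‖z - a‖).prod := by
  have h_prod := map_multiset_prod (normHom : 𝕜 →*₀ ℝ) (p.roots.map fun a ↦ z - a)
  rw [Multiset.map_map] at h_prod
  rw [hp.eval_eq_prod_roots, norm_mul]
  exact congrArg _ h_prod

theorem norm_eval_sub_one_mul_norm_eval_add_one_le {p : ℂ[X]} {r x : ℝ}
    (hp : ∀ z ∈ p.roots, ‖z‖ ≤ r) (hx : 2 * r ^ 2 + 1 ≤ x ^ 2) :
    ‖p.eval (x - 1 : ℂ)‖ * ‖p.eval (x + 1 : ℂ)‖ ≤ ‖p.eval (x : ℂ)‖ ^ 2 := by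
  simp only [norm_eval_eq_prod_roots (IsAlgClosed.splits p)]
  rw [mul_mul_mul_comm, mul_pow, ← sq, ← Multiset.prod_map_mul, ← Multiset.prod_map_pow]
  gcongr
  exact Multiset.prod_map_le_prod_map₀ _ _ (fun _ _ ↦ by positivity) fun z hz ↦
    norm_sub_one_sub_mul_norm_add_one_sub_le (hp z hz) hx

theorem norm_aeval_chromaticPolynomial_log_concave {V : Type*} [Finite V] {G : SimpleGraph V}
    {d : ℕ} (hd : ∀ v, (G.neighborSet v).ncard ≤ d) {x : ℝ} (hx : 98 * (d : ℝ) ^ 2 + 1 ≤ x ^ 2) :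
    ‖aeval (x - 1 : ℂ) (chromaticPolynomial G)‖ * ‖aeval (x + 1 : ℂ) (chromaticPolynomial G)‖ ≤
      ‖aeval (x : ℂ) (chromaticPolynomial G)‖ ^ 2 := by
  simp only [← eval_map_algebraMap]
  refine norm_eval_sub_one_mul_norm_eval_add_one_le (r := 7 * d) (fun z hz ↦ ?_) (by linarith)
  refine norm_le_of_aeval_chromaticPolynomial_eq_zero hd ?_
  rw [← eval_map_algebraMap]
  exact (mem_roots'.1 hz).2

end LogConcavity

theorem chromatic_log_concave_above_ten_maxDegree_general
    {V : Type*} [Fintype V] (G : SimpleGraph V) [DecidableRel G.Adj]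
    (q : ℕ) (hq : 98 * G.maxDegree ^ 2 + 1 ≤ q ^ 2) :
    Fintype.card (G.Coloring (Fin (q - 1))) * Fintype.card (G.Coloring (Fin (q + 1))) ≤
      Fintype.card (G.Coloring (Fin q)) ^ 2 := by
  have h_degree (v : V) : (G.neighborSet v).ncard ≤ G.maxDegree :=
    (Set.ncard_eq_toFinset_card' _).trans_le (G.degree_le_maxDegree v)
  have h_concave := norm_aeval_chromaticPolynomial_log_concave h_degree (x := q)
    (by exact_mod_cast hq)
  have hq_pos : 1 ≤ q := Nat.pos_of_ne_zero fun h ↦ by simp [h] at hq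
  have h_pred : ((q : ℝ) - 1 : ℂ) = (q - 1 : ℕ) := by push_cast [hq_pos]; rfl
  have h_succ : ((q : ℝ) + 1 : ℂ) = (q + 1 : ℕ) := by push_cast; rfl
  rw [h_pred, h_succ, Complex.ofReal_natCast] at h_concave
  simp only [aeval_natCast_chromaticPolynomial, Complex.norm_natCast,
    Nat.card_eq_fintype_card] at h_concave
  exact_mod_cast h_concave

/-- For a finite simple graph `G` with maximum degree `Δ`, the number of proper
`q`-colorings `P_G(q)` satisfies `P_G(q-1) * P_G(q+1) ≤ P_G(q)^2` for all `q ≥ 10*Δ + 1`. -/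
theorem chromatic_log_concave_above_ten_maxDegree
    {V : Type*} [Fintype V] (G : SimpleGraph V) [DecidableRel G.Adj]
    (q : ℕ) (hq : 10 * G.maxDegree + 1 ≤ q) :
    Fintype.card (G.Coloring (Fin (q - 1))) * Fintype.card (G.Coloring (Fin (q + 1))) ≤
      Fintype.card (G.Coloring (Fin q)) ^ 2 := by
  exact chromatic_log_concave_above_ten_maxDegree_general G q (by nlinarith)
end

section
/- For every real constant c < 1, there exist a finite simple graph G and a natural number q with q ≥ c·Δ(G) + 1 such that P_G(q−1)·P_G(q+1) > P_G(q)². Hence in the statement 'P_G is log-concave for all integers q ≥ C·Δ(G) + 1' the constant C cannot be taken smaller than 1. -/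
/-!
Joining `G` with the complete graph `K_m` multiplies `P_G(q)` by a falling factorial and shifts `q`
by `m`. So if `(q + 1) P_G(q)² < q P_G(q - 1) P_G(q + 1)` for one `G` and `q`, log-concavity fails
for the join at `q + m`, and since the maximum degree of the join is at most `|V(G)| + m`, this
happens at `q + m ≥ c Δ + 1` once `m` is large.

Such a `G` with `q = 4` comes from blowing up the vertices of a base graph. Up to a factor bounded
independently of the blow-up, the number of colourings of a blow-up is the largest product of
palette sizes, over all assignments of disjoint palettes to adjacent base vertices. The base graph
has a `3 × 5` grid of cells, adjacent when both coordinates differ, and a 5-cycle of further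
vertices, each placed in one row and two columns, which get blown up `n`-fold. With five colours
(the columns) every cycle vertex has a palette of size `2`, which gives `32 ^ n` colourings; three
colours (the rows) give at least one. With four colours the grid leaves each cycle vertex its own
colour and one common spare colour, and the spare is available only on an independent set of the
5-cycle, so there are `O(4 ^ n)` colourings; and `4 ^ 2 < 32`.
-/

open Finset SimpleGraph

namespace ChromaticLogConcavity

section Join

variable {V W α ι : Type*}

/-- The join of two graphs: their disjoint union together with all edges between the two sides. -/
def join (G : SimpleGraph V) (H : SimpleGraph W) : SimpleGraph (V ⊕ W) where
  Adj
    | .inl u, .inl v => G.Adj u v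
    | .inr u, .inr v => H.Adj u v
    | _, _ => True
  symm.symm
    | .inl _, .inl _ => G.adj_symm
    | .inr _, .inr _ => H.adj_symm
    | .inl _, .inr _ | .inr _, .inl _ => id
  loopless.irrefl
    | .inl _ => G.irrefl
    | .inr _ => H.irrefl

/-- A colouring of a join, split into a colouring of one side and a colouring of the other side by
the colours left over. -/
def coloringJoinEquiv (G : SimpleGraph V) (H : SimpleGraph W) :
    (join G H).Coloring α ≃ Σ C : G.Coloring α, H.Coloring ↥(Set.range C)ᶜ where
  toFun C :=
    ⟨.mk (fun v => C (.inl v)) fun {u v} h => C.valid (v := .inl u) (w := .inl v) h,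
      .mk (fun w => ⟨C (.inr w), by
          rintro ⟨v, hv⟩
          exact C.valid (v := .inl v) (w := .inr w) trivial hv⟩)
        fun {u v} h he => C.valid (v := .inr u) (w := .inr v) h (congrArg Subtype.val he)⟩
  invFun p := .mk (Sum.elim p.1 fun w => p.2 w) (by
    rintro (u | u) (v | v) h
    · exact p.1.valid h
    · exact fun he => (p.2 v).2 ⟨u, he⟩
    · exact fun he => (p.2 u).2 ⟨v, he.symm⟩
    · exact fun he => p.2.valid h (Subtype.ext he))
  left_inv C := by
    ext (v | w) <;> rfl
  right_inv p := rfl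

lemma card_coloring_top [Fintype ι] [Fintype α] :
    Nat.card ((⊤ : SimpleGraph ι).Coloring α) =
      (Fintype.card α).descFactorial (Fintype.card ι) := by
  classical
  let e : (⊤ : SimpleGraph ι).Coloring α ≃ (ι ↪ α) :=
    { toFun := fun C => ⟨C, Hom.injective_of_top_hom C⟩
      invFun := fun f => .mk f fun h => f.injective.ne h
      left_inv := fun _ => rfl
      right_inv := fun _ => rfl }
  rw [Nat.card_congr e, Nat.card_eq_fintype_card, Fintype.card_embedding_eq]

lemma card_coloring_join_top [Fintype ι] [Fintype α] (H : SimpleGraph W) :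
    Nat.card ((join (⊤ : SimpleGraph ι) H).Coloring α) =
      (Fintype.card α).descFactorial (Fintype.card ι) *
        Nat.card (H.Coloring (Fin (Fintype.card α - Fintype.card ι))) := by
  classical
  let recolor (C : (⊤ : SimpleGraph ι).Coloring α) :
      H.Coloring ↥(Set.range C)ᶜ ≃ H.Coloring (Fin (Fintype.card α - Fintype.card ι)) := by
    refine H.recolorOfEquiv (Fintype.equivFinOfCardEq ?_)
    rw [Fintype.card_compl_set, Set.card_range_of_injective (Hom.injective_of_top_hom C)]
  rw [Nat.card_congr ((coloringJoinEquiv ⊤ H).trans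
      ((Equiv.sigmaCongrRight recolor).trans (Equiv.sigmaEquivProd _ _))),
    Nat.card_prod, card_coloring_top]

theorem sq_card_coloring_join_top_lt {G : SimpleGraph V} {q : ℕ}
    (h : (q + 2) * Nat.card (G.Coloring (Fin (q + 1))) ^ 2 <
      (q + 1) * (Nat.card (G.Coloring (Fin q)) * Nat.card (G.Coloring (Fin (q + 2))))) (m : ℕ) :
    Nat.card ((join (⊤ : SimpleGraph (Fin m)) G).Coloring (Fin (q + m + 1))) ^ 2 <
      Nat.card ((join (⊤ : SimpleGraph (Fin m)) G).Coloring (Fin (q + m))) *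
        Nat.card ((join (⊤ : SimpleGraph (Fin m)) G).Coloring (Fin (q + m + 2))) := by
  simp only [card_coloring_join_top, Fintype.card_fin, Nat.add_sub_cancel,
    show q + m + 1 - m = q + 1 by omega, show q + m + 2 - m = q + 2 by omega]
  set P₀ := Nat.card (G.Coloring (Fin q))
  set P₁ := Nat.card (G.Coloring (Fin (q + 1)))
  set P₂ := Nat.card (G.Coloring (Fin (q + 2)))
  have hD₀ : (q + 1) * (q + m + 1).descFactorial m = (q + m + 1) * (q + m).descFactorial m := by
    rw [← Nat.succ_descFactorial, show q + m + 1 - m = q + 1 by omega]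
  have hD₁ :
      (q + 2) * (q + m + 2).descFactorial m = (q + m + 2) * (q + m + 1).descFactorial m := by
    rw [← Nat.succ_descFactorial, show q + m + 1 + 1 - m = q + 2 by omega]
  have hD : 0 < (q + m + 1).descFactorial m := Nat.descFactorial_pos.2 (by omega)
  set D₀ := (q + m).descFactorial m
  set D₁ := (q + m + 1).descFactorial m
  set D₂ := (q + m + 2).descFactorial m
  refine lt_of_mul_lt_mul_left (a := (q + m + 1) * (q + 2)) ?_ (Nat.zero_le _)
  calc (q + m + 1) * (q + 2) * (D₁ * P₁) ^ 2
      ≤ (q + m + 2) * (q + 2) * (D₁ * P₁) ^ 2 := by gcongr; omega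
    _ = (q + m + 2) * D₁ ^ 2 * ((q + 2) * P₁ ^ 2) := by ring
    _ < (q + m + 2) * D₁ ^ 2 * ((q + 1) * (P₀ * P₂)) := by gcongr
    _ = ((q + 1) * D₁) * ((q + m + 2) * D₁) * (P₀ * P₂) := by ring
    _ = ((q + m + 1) * D₀) * ((q + 2) * D₂) * (P₀ * P₂) := by rw [hD₀, hD₁]
    _ = (q + m + 1) * (q + 2) * (D₀ * P₀ * (D₂ * P₂)) := by ring

end Join

section BlowUp

variable {V α : Type*}

/-- The blow-up of `G` in which each vertex `v` becomes an independent set of size `w v`. -/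
def blowUp (G : SimpleGraph V) (w : V → ℕ) : SimpleGraph (Σ v, Fin (w v)) :=
  G.comap Sigma.fst

/-- A multicolouring assigns to each vertex a palette of colours (possibly empty), with disjoint
palettes on adjacent vertices. -/
def IsMulticoloring (G : SimpleGraph V) (S : V → Finset α) : Prop :=
  ∀ ⦃u v⦄, G.Adj u v → Disjoint (S u) (S v)

lemma IsMulticoloring.prod_card_pow_le_card_coloring_blowUp [Fintype V] [Finite α]
    {G : SimpleGraph V} {S : V → Finset α} (hS : IsMulticoloring G S) (w : V → ℕ) :
    ∏ v, #(S v) ^ w v ≤ Nat.card ((blowUp G w).Coloring α) := by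
  classical
  let colorOf (g : ∀ x : Σ v, Fin (w v), S x.1) : (blowUp G w).Coloring α :=
    .mk (fun x => g x) fun {x y} h => disjoint_iff_ne.1 (hS h) _ (g x).2 _ (g y).2
  have colorOf_injective : Function.Injective colorOf := fun g g' h =>
    funext fun x => Subtype.ext (DFunLike.congr_fun h x)
  calc ∏ v, #(S v) ^ w v = Nat.card (∀ x : Σ v, Fin (w v), S x.1) := by
        simp [Fintype.prod_sigma]
    _ ≤ _ := Nat.card_le_card_of_injective colorOf colorOf_injective

/-- The set of colours that a colouring of a blow-up uses on the copies of a vertex. -/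
def palette [DecidableEq α] {G : SimpleGraph V} {w : V → ℕ} (C : (blowUp G w).Coloring α) (v : V) :
    Finset α :=
  univ.image fun i => C ⟨v, i⟩

lemma palette_nonempty [DecidableEq α] {G : SimpleGraph V} {w : V → ℕ}
    (C : (blowUp G w).Coloring α) {v : V} (hv : 0 < w v) : (palette C v).Nonempty :=
  ⟨C ⟨v, 0, hv⟩, mem_image_of_mem _ (mem_univ _)⟩

lemma isMulticoloring_palette [DecidableEq α] {G : SimpleGraph V} {w : V → ℕ}
    (C : (blowUp G w).Coloring α) : IsMulticoloring G (palette C) := by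
  intro u v huv
  simp only [palette, disjoint_iff_ne, mem_image, mem_univ, true_and]
  rintro _ ⟨i, rfl⟩ _ ⟨j, rfl⟩
  exact C.valid (v := ⟨u, i⟩) (w := ⟨v, j⟩) huv

lemma card_filter_palette_eq_le [Fintype V] [Fintype α] [DecidableEq α]
    {G : SimpleGraph V} {w : V → ℕ} (S : V → Finset α) :
    #{C : (blowUp G w).Coloring α | palette C = S} ≤ ∏ v, #(S v) ^ w v := by
  classical
  let choices : Finset ((Σ v, Fin (w v)) → α) := Fintype.piFinset fun x => S x.1
  calc #{C : (blowUp G w).Coloring α | palette C = S} ≤ #choices := by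
        refine card_le_card_of_injOn (fun C => ⇑C) (fun C hC => ?_) DFunLike.coe_injective.injOn
        obtain rfl : palette C = S := by simpa using hC
        simp [choices, palette]
    _ = ∏ v, #(S v) ^ w v := by simp [choices, Fintype.prod_sigma]

theorem card_coloring_blowUp_le [Fintype V] [Fintype α] {G : SimpleGraph V} {w : V → ℕ}
    (hw : ∀ v, 0 < w v) {B : ℕ}
    (hB : ∀ S : V → Finset α, IsMulticoloring G S → (∀ v, (S v).Nonempty) →
      ∏ v, #(S v) ^ w v ≤ B) :
    Nat.card ((blowUp G w).Coloring α) ≤ B * 2 ^ (Fintype.card α * Fintype.card V) := by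
  classical
  calc Nat.card ((blowUp G w).Coloring α)
      ≤ B * #(univ.image (palette : (blowUp G w).Coloring α → V → Finset α)) := by
        rw [Nat.card_eq_fintype_card]
        refine card_le_mul_card_image _ _ fun S hS => ?_
        obtain ⟨C, -, rfl⟩ := mem_image.1 hS
        exact (card_filter_palette_eq_le _).trans
          (hB _ (isMulticoloring_palette C) fun v => palette_nonempty C (hw v))
    _ ≤ B * Fintype.card (V → Finset α) := by gcongr; exact card_le_univ _
    _ = B * 2 ^ (Fintype.card α * Fintype.card V) := by simp [pow_mul]

end BlowUp

section Grid

variable {ι κ α : Type*}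

lemma exists_forall_ne_mem_range [Fintype ι] [Fintype α]
    (hα : Fintype.card α = Fintype.card ι + 1) {r : ι → α} (hr : r.Injective) :
    ∃ e, ∀ c, c ≠ e → c ∈ Set.range r := by
  classical
  have hcard : #(univ.image r)ᶜ = 1 := by
    rw [card_compl, card_image_of_injective _ hr, card_univ, hα, Nat.add_sub_cancel_left]
  obtain ⟨e, he⟩ := card_eq_one.1 hcard
  refine ⟨e, fun c hc => ?_⟩
  have : c ∉ (univ.image r)ᶜ := by simpa [he] using hc
  simpa using this

variable [Fintype κ] [DecidableEq α]

lemma exists_mode [Fintype α] (f : κ → α) (h : Fintype.card α < Fintype.card κ) :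
    ∃ c, 1 < #{j | f j = c} ∧ ∀ c', #{j | f j = c'} ≤ #{j | f j = c} := by
  obtain ⟨c₀, hc₀⟩ := Fintype.exists_lt_card_fiber_of_mul_lt_card (n := 1) f (by simpa using h)
  obtain ⟨c, -, hc⟩ := exists_max_image univ (fun c => #{j | f j = c}) ⟨c₀, mem_univ _⟩
  exact ⟨c, hc₀.trans_le (hc c₀ (mem_univ _)), fun c' => hc c' (mem_univ _)⟩

lemma eq_row_of_one_lt_card {f : ι → κ → α}
    (hf : ∀ i i' j j', i ≠ i' → j ≠ j' → f i j ≠ f i' j') {i i' : ι} {j : κ} {c : α}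
    (hc : 1 < #{j | f i j = c}) (h : f i' j = c) : i' = i := by
  obtain ⟨j', hj', hne⟩ := exists_mem_ne hc j
  by_contra hi
  exact hf i' i j j' hi hne.symm (h.trans (mem_filter.1 hj').2.symm)

/-- Here `f` colours a grid and `A` is a palette for a further vertex in row `i` and columns `T`.
For `r i` one takes the most frequent colour of row `i`, which by pigeonhole occurs twice there and
hence in no other row. -/
theorem exists_forall_subset_pair [Fintype ι] [Fintype α]
    (hα : Fintype.card α = Fintype.card ι + 1) (hκ : Fintype.card α < Fintype.card κ)
    {f : ι → κ → α} (hf : ∀ i i' j j', i ≠ i' → j ≠ j' → f i j ≠ f i' j') :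
    ∃ (e : α) (r : ι → α), ∀ (i : ι) (T : Finset κ) (A : Finset α), 2 * #T < Fintype.card κ →
      (∀ c ∈ A, ∀ i', i' ≠ i → ∀ j ∉ T, f i' j ≠ c) → A ⊆ {e, r i} := by
  classical
  choose r hr_repeat hr_max using fun i => exists_mode (f i) hκ
  have hr_row {i i' j} (h : f i' j = r i) : i' = i := eq_row_of_one_lt_card hf (hr_repeat i) h
  have hr_inj : r.Injective := fun i i' h => by
    obtain ⟨j, hj⟩ := card_pos.1 (zero_lt_one.trans (hr_repeat i))
    exact hr_row ((mem_filter.1 hj).2.trans h)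
  obtain ⟨e, he⟩ := exists_forall_ne_mem_range hα hr_inj
  refine ⟨e, r, fun i T A hT hA c hc => ?_⟩
  rw [mem_insert, mem_singleton, or_iff_not_imp_left]
  intro hce
  obtain ⟨i', rfl⟩ := he c hce
  by_contra hne
  -- Otherwise row `i'` has colour `e` at every column outside `T`, so more often than its mode.
  have hi' : i' ≠ i := fun h => hne (by rw [h])
  have compl_subset : Tᶜ ⊆ ({j | f i' j = e} : Finset κ) := by
    intro j hj
    by_contra hje
    obtain ⟨i'', h⟩ := he (f i' j) (by simpa using hje)
    exact hA _ hc i' hi' j (mem_compl.1 hj) (by rw [← h, ← hr_row h.symm])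
  have mode_subset : ({j | f i' j = r i'} : Finset κ) ⊆ T := by
    intro j hj
    by_contra hjT
    exact hA _ hc i' hi' j hjT (by simpa using hj)
  have := (card_le_card compl_subset).trans ((hr_max i' e).trans (card_le_card mode_subset))
  rw [card_compl] at this
  omega

end Grid

section Base

/-- Vertices of the base graph: the cells of a `3 × 5` grid and the vertices of a 5-cycle. -/
abbrev BaseVertex : Type := (Fin 3 × Fin 5) ⊕ Fin 5

/-- The row of a base vertex; on the cycle vertices it is a proper 3-colouring of the 5-cycle. -/
def row : BaseVertex → Fin 3 :=
  Sum.elim Prod.fst ![0, 0, 1, 1, 2]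

/-- The columns met by a base vertex. Cycle vertices `k` and `l` are adjacent when `{k, k + 1}` and
`{l, l + 1}` are disjoint, that is, when `l = k ± 2` modulo `5`. -/
def columns : BaseVertex → Finset (Fin 5) :=
  Sum.elim (fun p => {p.2}) fun k => {k, k + 1}

/-- The base graph: adjacent vertices lie in different rows and have no column in common. -/
def baseGraph : SimpleGraph BaseVertex where
  Adj x y := row x ≠ row y ∧ Disjoint (columns x) (columns y)
  symm.symm _ _ h := ⟨h.1.symm, h.2.symm⟩
  loopless.irrefl _ h := h.1 rfl

/-- The sizes of the vertex classes of the blow-up: cells are kept, cycle vertices become `n`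
vertices each. -/
def baseWeight (n : ℕ) : BaseVertex → ℕ :=
  Sum.elim (fun _ => 1) fun _ => n

lemma isMulticoloring_row : IsMulticoloring baseGraph fun x => {row x} :=
  fun _ _ h => disjoint_singleton.2 h.1

lemma isMulticoloring_columns : IsMulticoloring baseGraph columns :=
  fun _ _ h => h.2

lemma baseGraph_adj_inr_inr {k l : Fin 5} (h : Disjoint (columns (.inr k)) (columns (.inr l))) :
    baseGraph.Adj (.inr k) (.inr l) := by
  refine ⟨?_, h⟩
  revert k l
  decide

lemma card_le_two_of_columns_not_disjoint :
    ∀ I : Finset (Fin 5),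
      (∀ k ∈ I, ∀ l ∈ I, ¬Disjoint (columns (.inr k)) (columns (.inr l))) → #I ≤ 2 := by
  decide

lemma IsMulticoloring.prod_card_inr_le_four {S : BaseVertex → Finset (Fin 4)}
    (hS : IsMulticoloring baseGraph S) (hne : ∀ x, (S x).Nonempty) :
    ∏ k, #(S (.inr k)) ≤ 4 := by
  choose f hf using fun i j => hne (.inl (i, j))
  have hf_ne i i' j j' (hi : i ≠ i') (hj : j ≠ j') : f i j ≠ f i' j' :=
    disjoint_iff_ne.1 (hS (u := .inl (i, j)) (v := .inl (i', j'))
      ⟨hi, disjoint_singleton.2 hj⟩) _ (hf i j) _ (hf i' j')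
  obtain ⟨e, r, her⟩ := exists_forall_subset_pair (by simp) (by simp) hf_ne
  have hsub k : S (.inr k) ⊆ {e, r (row (.inr k))} := by
    refine her _ (columns (.inr k)) _ ?_ fun c hc i hi j hj => ?_
    · have : #(columns (.inr k)) ≤ 2 := card_le_two
      simp only [Fintype.card_fin]
      omega
    · exact disjoint_iff_ne.1 (hS (u := .inl (i, j)) (v := .inr k)
        ⟨hi, disjoint_singleton_left.2 hj⟩) _ (hf i j) _ hc
  have hcard k : #(S (.inr k)) ≤ if e ∈ S (.inr k) then 2 else 1 := by
    split_ifs with he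
    · exact (card_le_card (hsub k)).trans card_le_two
    · exact card_le_card ((subset_insert_iff_of_notMem he).1 (hsub k))
  have hspare : #{k | e ∈ S (.inr k)} ≤ 2 := by
    refine card_le_two_of_columns_not_disjoint _ fun k hk l hl hkl => ?_
    simp only [mem_filter, mem_univ, true_and] at hk hl
    exact disjoint_left.1 (hS (baseGraph_adj_inr_inr hkl)) hk hl
  calc ∏ k, #(S (.inr k)) ≤ ∏ k, if e ∈ S (.inr k) then 2 else 1 :=
        prod_le_prod' fun k _ => hcard k
    _ = 2 ^ #{k | e ∈ S (.inr k)} := by simp [prod_ite]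
    _ ≤ 2 ^ 2 := by gcongr; norm_num

lemma one_le_card_coloring_blowUp_baseGraph_three (n : ℕ) :
    1 ≤ Nat.card ((blowUp baseGraph (baseWeight n)).Coloring (Fin 3)) := by
  simpa using isMulticoloring_row.prod_card_pow_le_card_coloring_blowUp (baseWeight n)

lemma pow_le_card_coloring_blowUp_baseGraph_five (n : ℕ) :
    32 ^ n ≤ Nat.card ((blowUp baseGraph (baseWeight n)).Coloring (Fin 5)) := by
  have hcard : ∀ k : Fin 5, #(columns (.inr k)) = 2 := by decide
  calc 32 ^ n = ∏ x, #(columns x) ^ baseWeight n x := by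
        rw [Fintype.prod_sum_type]
        simp only [baseWeight, Sum.elim_inl, Sum.elim_inr, hcard]
        simp [columns, ← pow_mul, mul_comm n, pow_mul 2 5]
    _ ≤ _ := isMulticoloring_columns.prod_card_pow_le_card_coloring_blowUp (baseWeight n)

lemma card_coloring_blowUp_baseGraph_four_le {n : ℕ} (hn : 0 < n) :
    Nat.card ((blowUp baseGraph (baseWeight n)).Coloring (Fin 4)) ≤ 2 ^ 110 * 4 ^ n := by
  have hw : ∀ x, 0 < baseWeight n x := by
    rintro (_ | _)
    exacts [one_pos, hn]
  refine (card_coloring_blowUp_le (B := 4 ^ 15 * 4 ^ n) hw fun S hS hne => ?_).trans_eq ?_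
  · calc ∏ x, #(S x) ^ baseWeight n x
        = (∏ p, #(S (.inl p))) * (∏ k, #(S (.inr k))) ^ n := by
          simp [Fintype.prod_sum_type, baseWeight, prod_pow]
      _ ≤ 4 ^ 15 * 4 ^ n := by
          gcongr
          · exact prod_le_pow_card univ _ 4 fun p _ => card_le_univ (S (.inl p))
          · exact hS.prod_card_inr_le_four hne
  · simp only [Fintype.card_fin, Fintype.card_sum, Fintype.card_prod]
    ring

theorem exists_five_mul_sq_card_coloring_lt :
    ∃ (V : Type) (_ : Fintype V) (G : SimpleGraph V),
      5 * Nat.card (G.Coloring (Fin 4)) ^ 2 <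
        4 * (Nat.card (G.Coloring (Fin 3)) * Nat.card (G.Coloring (Fin 5))) := by
  -- `221` is the least `n` with `5 * (2 ^ 110 * 4 ^ n) ^ 2 < 4 * 32 ^ n`.
  refine ⟨_, inferInstance, blowUp baseGraph (baseWeight 221), ?_⟩
  calc _ ≤ 5 * (2 ^ 110 * 4 ^ 221) ^ 2 := by
        gcongr
        exact card_coloring_blowUp_baseGraph_four_le (by norm_num)
    _ < 4 * (1 * 32 ^ 221) := by norm_num
    _ ≤ _ := by
        gcongr
        · exact one_le_card_coloring_blowUp_baseGraph_three 221
        · exact pow_le_card_coloring_blowUp_baseGraph_five 221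

end Base

lemma exists_forall_le_add_imp_mul_le {c : ℝ} (hc : c < 1) (N : ℕ) :
    ∃ m : ℕ, ∀ d : ℕ, d ≤ m + N → c * d ≤ m := by
  obtain ⟨m, hm⟩ := exists_nat_ge (N / (1 - c))
  rw [div_le_iff₀ (sub_pos.2 hc)] at hm
  refine ⟨m, fun d hd => ?_⟩
  have hd' : (d : ℝ) ≤ m + N := mod_cast hd
  rcases le_total c 0 with h0 | h0
  · exact (mul_nonpos_of_nonpos_of_nonneg h0 d.cast_nonneg).trans m.cast_nonneg
  · calc c * d ≤ c * (m + N) := by gcongr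
      _ ≤ c * m + N := by rw [mul_add]; gcongr; exact mul_le_of_le_one_left N.cast_nonneg hc.le
      _ ≤ m := by linarith

end ChromaticLogConcavity

open ChromaticLogConcavity

/-- For every real constant `c < 1` there exist a finite simple graph `G` and a
natural number `q` with `q ≥ c·Δ(G) + 1` for which log-concavity fails:
`P_G(q-1) · P_G(q+1) > P_G(q)²`. Hence the constant `C` in "`P_G` is log-concave for all
integers `q ≥ C·Δ(G) + 1`" cannot be taken smaller than `1`. -/
theorem log_concavity_constant_not_lt_one (c : ℝ) (hc : c < 1) :
    ∃ (V : Type) (hV : Fintype V) (G : SimpleGraph V) (hG : DecidableRel G.Adj) (q : ℕ),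
      c * (@SimpleGraph.maxDegree V G hV hG : ℝ) + 1 ≤ (q : ℝ) ∧
      Nat.card (G.Coloring (Fin q)) ^ 2 <
        Nat.card (G.Coloring (Fin (q - 1))) * Nat.card (G.Coloring (Fin (q + 1))) := by
  classical
  obtain ⟨V, hV, G, hG⟩ := exists_five_mul_sq_card_coloring_lt
  obtain ⟨m, hm⟩ := exists_forall_le_add_imp_mul_le hc (Fintype.card V)
  refine ⟨Fin m ⊕ V, inferInstance, join ⊤ G, inferInstance, 3 + m + 1, ?_,
    sq_card_coloring_join_top_lt hG m⟩
  have hΔ : (join (⊤ : SimpleGraph (Fin m)) G).maxDegree ≤ m + Fintype.card V := by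
    refine maxDegree_le_of_forall_degree_le _ _ fun v => (degree_lt_card_verts v).le.trans_eq ?_
    rw [Fintype.card_sum, Fintype.card_fin]
  have := hm _ hΔ
  push_cast
  linarith
end
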